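/- arXiv:2102.13049 — 3 statements merged into one kernel-verified Lean document; each statement's English description precedes it below -/
import Mathlib

section
/- Let (X,ρ) be a metric space, let k, l ≥ 2 be integers, and suppose {y_s}_{s ∈ l^{<ω}} is a strongly (k,l)-regular set in X. Then the set Y = {y_s : s ∈ l^{<ω}} satisfies dim_L Y ≥ (log l)/(k·log 2); in particular dim_ML X ≥ (log l)/(k·log 2). -/
open Metric ENNReal

variable {X : Type*} [MetricSpace X]

/-- `E` can be covered by `n` sets of diameter at most `r`. -/
def IsCoverBy (r : ℝ) (E : Set X) (n : ℕ) : Prop :=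
  ∃ f : Fin n → Set X, (∀ i, EMetric.diam (f i) ≤ ENNReal.ofReal r) ∧ E ⊆ ⋃ i, f i

/-- The lower (minimal) dimension of `A ⊆ X`, with the metric induced from `X`,
taking values in `[0, ∞]`.  It is the supremum of those `α ≥ 0` for which there is a
constant `C > 0` such that every ball `B(x, R) ∩ A` (with `x ∈ A` and `0 < r < R ≤ diam A`)
needs at least `C (R/r)^α` sets of diameter at most `r` to be covered. -/
noncomputable def lowerDim (A : Set X) : ℝ≥0∞ :=
  sSup (ENNReal.ofReal '' {α : ℝ | 0 ≤ α ∧ ∃ C : ℝ, 0 < C ∧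
    ∀ r R : ℝ, 0 < r → r < R → ENNReal.ofReal R ≤ EMetric.diam A →
      ∀ x ∈ A, ∀ n : ℕ,
        IsCoverBy r (Metric.closedBall x R ∩ A) n → C * (R / r) ^ α ≤ (n : ℝ)})

/-- The modified lower dimension of `A ⊆ X`: the supremum of the lower dimensions of all
subsets of `A`. -/
noncomputable def modLowerDim (A : Set X) : ℝ≥0∞ :=
  ⨆ (E : Set X) (_ : E ⊆ A), lowerDim E

/-- A `(k,l)`-regular set in `X`: a family of points indexed by finite sequences with entries
in `{0, …, l-1}` such that (i) consecutive points are `2^{-kn-1}`-close and (ii) points with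
distinct indices of the same length `n` are `2^{-kn+2}`-separated. -/
def IsRegularSet (k l : ℕ) (y : List (Fin l) → X) : Prop :=
  (∀ (s : List (Fin l)) (c : Fin l),
      dist (y s) (y (s ++ [c])) ≤ (2 : ℝ) ^ (-(k * s.length : ℤ) - 1)) ∧
  (∀ s t : List (Fin l), s.length = t.length → s ≠ t →
      (2 : ℝ) ^ (-(k * s.length : ℤ) + 2) ≤ dist (y s) (y t))

/-- A strongly `(k,l)`-regular set: a `(k,l)`-regular set that additionally satisfies
`y_{s⌢0} = y_s` for all `s`. -/
def IsStronglyRegularSet (k l : ℕ) (y : List (Fin l) → X) : Prop :=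
  IsRegularSet k l y ∧
  ∀ (s : List (Fin l)) (c : Fin l), (c : ℕ) = 0 → y (s ++ [c]) = y s

theorem IsRegularSet.dist_append_singleton_le {X : Type*} [MetricSpace X] {k l : ℕ}
    {y : List (Fin l) → X} (hy : IsRegularSet k l y) (s : List (Fin l)) (c : Fin l) :
    dist (y s) (y (s ++ [c])) ≤ ((1 / 2 : ℝ) ^ k) ^ s.length / 2 := by
  refine (hy.1 s c).trans_eq ?_
  rw [zpow_sub₀ two_ne_zero, zpow_neg, ← pow_mul, one_div, inv_pow, zpow_one]
  norm_cast

theorem IsRegularSet.le_dist {X : Type*} [MetricSpace X] {k l : ℕ}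
    {y : List (Fin l) → X} (hy : IsRegularSet k l y) {s t : List (Fin l)}
    (hst : s.length = t.length) (hne : s ≠ t) :
    4 * ((1 / 2 : ℝ) ^ k) ^ s.length ≤ dist (y s) (y t) := by
  refine Eq.trans_le ?_ (hy.2 s t hst hne)
  rw [zpow_add₀ two_ne_zero, zpow_neg, ← pow_mul, one_div, inv_pow, mul_comm]
  norm_num
  norm_cast

theorem half_pow_le_quarter {k : ℕ} (hk : 2 ≤ k) : (1 / 2 : ℝ) ^ k ≤ 1 / 4 :=
  (pow_le_pow_of_le_one (by norm_num) (by norm_num) hk).trans_eq (by norm_num)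

theorem IsRegularSet.dist_append_le {X : Type*} [MetricSpace X] {k l : ℕ} (hk : 2 ≤ k)
    {y : List (Fin l) → X} (hy : IsRegularSet k l y) (s u : List (Fin l)) :
    dist (y s) (y (s ++ u)) ≤ ((1 / 2 : ℝ) ^ k) ^ s.length := by
  induction u generalizing s with
  | nil => simp
  | cons c u ih =>
    have h₁ := hy.dist_append_singleton_le s c
    have h₂ := ih (s ++ [c])
    rw [List.append_assoc, List.singleton_append, List.length_append, List.length_singleton,
      pow_succ] at h₂
    have h₃ : ((1 / 2 : ℝ) ^ k) ^ s.length * (1 / 2) ^ k ≤ ((1 / 2 : ℝ) ^ k) ^ s.length * (1 / 4) :=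
      mul_le_mul_of_nonneg_left (half_pow_le_quarter hk) (by positivity)
    have h₄ : (0 : ℝ) ≤ ((1 / 2 : ℝ) ^ k) ^ s.length := by positivity
    linarith [dist_triangle (y s) (y (s ++ [c])) (y (s ++ c :: u))]

theorem IsRegularSet.ediam_range_le {X : Type*} [MetricSpace X] {k l : ℕ} (hk : 2 ≤ k)
    {y : List (Fin l) → X} (hy : IsRegularSet k l y) :
    Metric.ediam (Set.range y) ≤ ENNReal.ofReal 2 := by
  refine Metric.ediam_le ?_
  rintro _ ⟨s, rfl⟩ _ ⟨t, rfl⟩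
  rw [edist_dist]
  refine ENNReal.ofReal_le_ofReal ?_
  have hs := hy.dist_append_le hk [] s
  have ht := hy.dist_append_le hk [] t
  simp only [List.nil_append, List.length_nil, pow_zero] at hs ht
  linarith [dist_triangle_left (y s) (y t) (y [])]

theorem IsStronglyRegularSet.append_replicate_zero {X : Type*} [MetricSpace X] {k l : ℕ}
    {y : List (Fin l) → X} (hy : IsStronglyRegularSet k l y) {c : Fin l} (hc : (c : ℕ) = 0)
    (s : List (Fin l)) (n : ℕ) : y (s ++ List.replicate n c) = y s := by
  induction n with
  | zero => simp
  | succ n ih => rw [List.replicate_succ', ← List.append_assoc, hy.2 _ c hc, ih]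

/-- Every point of a strongly regular set is approximated by a point of any prescribed level. -/
theorem IsStronglyRegularSet.exists_length_eq_dist_le {X : Type*} [MetricSpace X] {k l : ℕ}
    (hk : 2 ≤ k) (hl : 2 ≤ l) {y : List (Fin l) → X} (hy : IsStronglyRegularSet k l y)
    (s : List (Fin l)) (N : ℕ) :
    ∃ t : List (Fin l), t.length = N ∧ dist (y t) (y s) ≤ ((1 / 2 : ℝ) ^ k) ^ N := by
  rcases le_total N s.length with h | h
  · have hN : (s.take N).length = N := by simp [h]
    refine ⟨s.take N, hN, ?_⟩
    simpa only [List.take_append_drop, hN] using hy.1.dist_append_le hk (s.take N) (s.drop N)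
  · refine ⟨s ++ List.replicate (N - s.length) ⟨0, by omega⟩, by simp [h], ?_⟩
    rw [hy.append_replicate_zero rfl, dist_self]
    positivity

/-- A cover of a ball by sets of small diameter has at least as many members as there are
words of the level determined by that diameter below the centre. -/
theorem IsStronglyRegularSet.pow_le_of_isCoverBy {X : Type*} [MetricSpace X] {k l : ℕ}
    (hk : 2 ≤ k) (hl : 2 ≤ l) {y : List (Fin l) → X} (hy : IsStronglyRegularSet k l y)
    {r R : ℝ} {N j n : ℕ} (hr : 0 < r) (hR : 2 * ((1 / 2 : ℝ) ^ k) ^ N ≤ R)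
    (hrj : r < 4 * ((1 / 2 : ℝ) ^ k) ^ (N + j)) (s : List (Fin l))
    (hn : IsCoverBy r (Metric.closedBall (y s) R ∩ Set.range y) n) : l ^ j ≤ n := by
  obtain ⟨f, hf, hcov⟩ := hn
  obtain ⟨t, htN, hts⟩ := hy.exists_length_eq_dist_le hk hl s N
  have hmem (w : Fin j → Fin l) : ∃ i, y (t ++ List.ofFn w) ∈ f i := by
    refine Set.mem_iUnion.1 (hcov ⟨?_, Set.mem_range_self _⟩)
    have h := hy.1.dist_append_le hk t (List.ofFn w)
    rw [htN] at h
    rw [Metric.mem_closedBall]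
    linarith [dist_triangle_left (y (t ++ List.ofFn w)) (y s) (y t)]
  choose g hg using hmem
  have hinj : Function.Injective g := by
    intro v w hvw
    by_contra hne
    have hne' : t ++ List.ofFn v ≠ t ++ List.ofFn w := fun h =>
      hne (List.ofFn_injective (List.append_cancel_left h))
    have hsep := hy.1.le_dist (by simp) hne'
    rw [List.length_append, List.length_ofFn, htN] at hsep
    have hle := (Metric.edist_le_ediam_of_mem (hg v) (hvw ▸ hg w)).trans (hf (g v))
    rw [edist_dist, ENNReal.ofReal_le_ofReal_iff hr.le] at hle
    linarith
  simpa using Fintype.card_le_of_injective g hinj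

theorem IsStronglyRegularSet.div_rpow_le_of_isCoverBy {X : Type*} [MetricSpace X] {k l : ℕ}
    (hk : 2 ≤ k) (hl : 2 ≤ l) {y : List (Fin l) → X} (hy : IsStronglyRegularSet k l y)
    {r R : ℝ} {n : ℕ} (hr : 0 < r) (hrR : r < R) (hR2 : R ≤ 2) (s : List (Fin l))
    (hn : IsCoverBy r (Metric.closedBall (y s) R ∩ Set.range y) n) :
    1 / (l : ℝ) ^ 2 * (R / r) ^ (Real.log l / (k * Real.log 2)) ≤ n := by
  have hR : 0 < R := hr.trans hrR
  have hl0 : (0 : ℝ) < l := by positivity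
  set q : ℝ := (1 / 2 : ℝ) ^ k with hq
  have hq0 : 0 < q := by positivity
  have hq1 : q < 1 := (half_pow_le_quarter hk).trans_lt (by norm_num)
  have hN : ∃ N : ℕ, 2 * q ^ N ≤ R := by
    obtain ⟨N, hN⟩ := exists_pow_lt_of_lt_one (half_pos hR) hq1
    exact ⟨N, by linarith⟩
  obtain ⟨N, hNR, hRN⟩ : ∃ N : ℕ, 2 * q ^ N ≤ R ∧ R * q ≤ 2 * q ^ N := by
    classical
    refine ⟨Nat.find hN, Nat.find_spec hN, ?_⟩
    rcases h : Nat.find hN with _ | m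
    · nlinarith
    · have := Nat.find_min hN (m := m) (by omega)
      rw [pow_succ]
      nlinarith
  have hJ : ∃ j : ℕ, 4 * q ^ (N + j) ≤ r := by
    obtain ⟨j, hj⟩ := exists_pow_lt_of_lt_one (div_pos hr four_pos) hq1
    have : q ^ (N + j) ≤ q ^ j := pow_le_pow_of_le_one hq0.le hq1.le (by omega)
    exact ⟨j, by linarith⟩
  obtain ⟨j, hjr, hjn⟩ : ∃ j : ℕ, 4 * q ^ (N + j) ≤ r ∧ l ^ j ≤ l * n := by
    classical
    refine ⟨Nat.find hJ, Nat.find_spec hJ, ?_⟩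
    rcases h : Nat.find hJ with _ | m
    · have hn0 : n ≠ 0 := by
        rintro rfl
        obtain ⟨f, -, hcov⟩ := hn
        obtain ⟨i, -⟩ := Set.mem_iUnion.1
          (hcov ⟨Metric.mem_closedBall_self hR.le, Set.mem_range_self s⟩)
        exact i.elim0
      exact Nat.mul_pos (by omega) (Nat.pos_of_ne_zero hn0)
    · rw [pow_succ']
      refine Nat.mul_le_mul_left l (hy.pow_le_of_isCoverBy hk hl hr hNR ?_ s hn)
      exact not_le.1 (Nat.find_min hJ (by omega))
  have hratio : R / r ≤ ((2 : ℝ) ^ k) ^ (j + 1) := by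
    have hinv : ((2 : ℝ) ^ k) ^ (j + 1) = (q ^ (j + 1))⁻¹ := by
      rw [hq, one_div, inv_pow, inv_pow, inv_inv]
    rw [hinv, div_le_iff₀ hr, inv_mul_eq_div, le_div_iff₀ (by positivity)]
    have h₁ : R * q * q ^ j ≤ 2 * q ^ N * q ^ j := by gcongr
    rw [pow_add] at hjr
    rw [pow_succ']
    nlinarith [mul_pos (pow_pos hq0 N) (pow_pos hq0 j)]
  have hpow : (((2 : ℝ) ^ k) ^ (j + 1)) ^ (Real.log l / (k * Real.log 2)) = (l : ℝ) ^ (j + 1) := by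
    have hlog : Real.log 2 ≠ 0 := (Real.log_pos one_lt_two).ne'
    have hk0 : (k : ℝ) ≠ 0 := by positivity
    rw [Real.rpow_def_of_pos (by positivity), Real.log_pow, Real.log_pow,
      ← Real.exp_log (pow_pos hl0 (j + 1)), Real.log_pow]
    congr 1
    field_simp
  have hα : 0 ≤ Real.log l / (k * Real.log 2) := by positivity
  have hmain : (R / r) ^ (Real.log l / (k * Real.log 2)) ≤ (l : ℝ) ^ (j + 1) :=
    (Real.rpow_le_rpow (by positivity) hratio hα).trans_eq hpow
  have hjn' : (l : ℝ) ^ j ≤ l * n := by exact_mod_cast hjn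
  rw [one_div_mul_eq_div, div_le_iff₀ (by positivity)]
  refine hmain.trans ?_
  rw [pow_succ]
  nlinarith

/-- If `{y_s}` is a strongly `(k,l)`-regular set in a metric space `X` (`k, l ≥ 2`), then
`Y = {y_s : s ∈ l^{<ω}}` satisfies `dim_L Y ≥ log l / (k log 2)`; in particular
`dim_ML X ≥ log l / (k log 2)`. -/
theorem stmt4 {X : Type*} [MetricSpace X] (k l : ℕ) (hk : 2 ≤ k) (hl : 2 ≤ l)
    (y : List (Fin l) → X) (hy : IsStronglyRegularSet k l y) :
    ENNReal.ofReal (Real.log l / (k * Real.log 2)) ≤ lowerDim (Set.range y) ∧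
    ENNReal.ofReal (Real.log l / (k * Real.log 2)) ≤ modLowerDim (Set.univ : Set X) := by
  have hlow : ENNReal.ofReal (Real.log l / (k * Real.log 2)) ≤ lowerDim (Set.range y) := by
    refine le_sSup ⟨_, ⟨by positivity, 1 / (l : ℝ) ^ 2, by positivity, ?_⟩, rfl⟩
    rintro r R hr hrR hdiam _ ⟨s, rfl⟩ n hn
    have hR2 : R ≤ 2 :=
      (ENNReal.ofReal_le_ofReal_iff zero_le_two).1 (hdiam.trans (hy.1.ediam_range_le hk))
    exact hy.div_rpow_le_of_isCoverBy hk hl hr hrR hR2 s hn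
  exact ⟨hlow, hlow.trans (le_iSup₂_of_le (Set.range y) (Set.subset_univ _) le_rfl)⟩
end

section
/- Let (X,ρ) be a complete metric space, let k, l ≥ 2 be integers, and suppose {y_s}_{s ∈ l^{<ω}} is a (k,l)-regular set in X. Define D_s = B(y_s, 2^{−kn}) for s ∈ l^n, and let K = ⋂_{n=0}^∞ ⋃_{s ∈ l^n} D_s. Then dim_L K ≥ (log l)/(k·log 2); in particular dim_ML X ≥ (log l)/(k·log 2). -/
open Metric ENNReal

variable {X : Type*} [MetricSpace X]

namespace IsRegularSet

variable {X : Type*} [MetricSpace X] {k l : ℕ} {y : List (Fin l) → X}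

/-- The ball attached to an extension of `s` is contained in the ball attached to `s`. -/
lemma closedBall_append_subset (hk : 2 ≤ k) (hy : IsRegularSet k l y) (s t : List (Fin l)) :
    closedBall (y (s ++ t)) ((2 : ℝ) ^ (-(k * (s ++ t).length : ℤ))) ⊆
      closedBall (y s) ((2 : ℝ) ^ (-(k * s.length : ℤ))) := by
  induction t using List.reverseRecOn with
  | nil => simp
  | append_singleton t c ih =>
    refine Set.Subset.trans ?_ ih
    rw [← List.append_assoc]
    generalize s ++ t = u
    apply closedBall_subset_closedBall'
    have h1 := hy.1 u c
    rw [dist_comm] at h1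
    have h2 : (2 : ℝ) ^ (-(k * (u ++ [c]).length : ℤ)) ≤ 2 ^ (-(k * u.length : ℤ) - 1) := by
      apply zpow_le_zpow_right₀ (by norm_num)
      simp only [List.length_append, List.length_singleton]
      push_cast
      have : (2 : ℤ) ≤ k := by exact_mod_cast hk
      linarith
    have h3 : (2 : ℝ) ^ (-(k * u.length : ℤ)) = 2 * 2 ^ (-(k * u.length : ℤ) - 1) := by
      rw [zpow_sub_one₀ (by norm_num)]
      ring
    linarith

/-- The set `K` meets each of the balls of the construction. -/
lemma exists_mem_iInter [CompleteSpace X] (hk : 2 ≤ k) (hl : 2 ≤ l) (hy : IsRegularSet k l y)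
    (u : List (Fin l)) :
    ∃ z ∈ closedBall (y u) ((2 : ℝ) ^ (-(k * u.length : ℤ))),
      z ∈ ⋂ n : ℕ, ⋃ s ∈ {s : List (Fin l) | s.length = n},
        closedBall (y s) ((2 : ℝ) ^ (-(k * n : ℤ))) := by
  let v : ℕ → List (Fin l) := fun j => u ++ List.replicate j ⟨0, by omega⟩
  have v_append (i j : ℕ) : v (i + j) = v i ++ List.replicate j ⟨0, by omega⟩ := by
    simp only [v, List.replicate_add, List.append_assoc]
  have v_length (i : ℕ) : (v i).length = u.length + i := by simp [v]
  have hstep (j : ℕ) : dist (y (v j)) (y (v (j + 1))) ≤ 1 / 2 / 2 ^ j := by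
    rw [v_append]
    refine (hy.1 _ _).trans ?_
    have : (1 / 2 / 2 ^ j : ℝ) = 2 ^ (-(j : ℤ) - 1) := by
      rw [zpow_sub_one₀ (by norm_num), zpow_neg, zpow_natCast]
      field_simp
    rw [this, v_length]
    apply zpow_le_zpow_right₀ (by norm_num)
    push_cast
    have : (2 : ℤ) ≤ k := by exact_mod_cast hk
    nlinarith
  obtain ⟨z, hz⟩ := cauchySeq_tendsto_of_complete (cauchySeq_of_le_geometric_two hstep)
  have hmem (i : ℕ) : z ∈ closedBall (y (v i)) ((2 : ℝ) ^ (-(k * (v i).length : ℤ))) := by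
    refine isClosed_closedBall.mem_of_tendsto hz ?_
    filter_upwards [Filter.eventually_ge_atTop i] with j hj
    obtain ⟨m, rfl⟩ := Nat.exists_eq_add_of_le hj
    rw [v_append]
    exact hy.closedBall_append_subset hk _ _ (mem_closedBall_self (by positivity))
  refine ⟨z, by simpa [v] using hmem 0, ?_⟩
  simp only [Set.mem_iInter, Set.mem_iUnion]
  intro n
  have hlen : ((v n).take n).length = n := by simp [v_length]
  refine ⟨(v n).take n, hlen, ?_⟩
  have := hmem n
  rw [← List.take_append_drop n (v n)] at this
  have := hy.closedBall_append_subset hk _ _ this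
  rwa [hlen] at this

/-- Points of distinct balls of the same level are separated. -/
lemma le_dist_of_mem (hy : IsRegularSet k l y) {s t : List (Fin l)} (hst : s.length = t.length)
    (hne : s ≠ t) {a b : X} (ha : a ∈ closedBall (y s) ((2 : ℝ) ^ (-(k * s.length : ℤ))))
    (hb : b ∈ closedBall (y t) ((2 : ℝ) ^ (-(k * t.length : ℤ)))) :
    2 * (2 : ℝ) ^ (-(k * s.length : ℤ)) ≤ dist a b := by
  have h := hy.2 s t hst hne
  rw [zpow_add₀ (by norm_num), show (2 : ℝ) ^ (2 : ℤ) = 4 by norm_num] at h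
  rw [← hst] at hb
  rw [mem_closedBall] at ha hb
  rw [dist_comm] at ha
  have := dist_triangle4 (y s) a b (y t)
  linarith

end IsRegularSet

/-- A set containing points `z i`, pairwise at distance more than `r`, needs at least as many
sets of diameter at most `r` to be covered. -/
lemma IsCoverBy.card_le {X ι : Type*} [MetricSpace X] [Fintype ι] {r : ℝ} (hr : 0 ≤ r)
    {E : Set X} {n : ℕ} (h : IsCoverBy r E n) (z : ι → X) (hz : ∀ i, z i ∈ E)
    (hsep : ∀ i j, i ≠ j → r < dist (z i) (z j)) : Fintype.card ι ≤ n := by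
  obtain ⟨f, hf, hE⟩ := h
  choose g hg using fun i => Set.mem_iUnion.1 (hE (hz i))
  have hinj : Function.Injective g := by
    intro i j hij
    by_contra hne
    have h1 : edist (z i) (z j) ≤ ENNReal.ofReal r :=
      (Metric.edist_le_ediam_of_mem (hg i) (hij ▸ hg j)).trans (hf _)
    rw [edist_dist, ENNReal.ofReal_le_ofReal_iff hr] at h1
    exact (hsep i j hne).not_ge h1
  simpa using Fintype.card_le_of_injective g hinj

/-- Every scale `0 < r ≤ 2` is caught by the geometric sequence `2 * 2 ^ (-k m)`. -/
lemma exists_scale {k : ℕ} (hk : 2 ≤ k) {r : ℝ} (hr : 0 < r) (hr2 : r ≤ 2) :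
    ∃ m : ℕ, 2 * (2 : ℝ) ^ (-(k * m : ℤ)) ≤ r ∧ r ≤ 2 * (2 : ℝ) ^ (k - k * m : ℤ) ∧
      ∀ i < m, r < 2 * (2 : ℝ) ^ (-(k * i : ℤ)) := by
  have hex : ∃ m : ℕ, 2 * (2 : ℝ) ^ (-(k * m : ℤ)) ≤ r := by
    obtain ⟨m, hm⟩ := exists_pow_lt_of_lt_one (half_pos hr) (by norm_num : (1 / 2 : ℝ) < 1)
    refine ⟨m, ?_⟩
    have : (2 : ℝ) ^ (-(k * m : ℤ)) ≤ (1 / 2) ^ m := by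
      rw [one_div, inv_pow, ← zpow_natCast, ← zpow_neg]
      apply zpow_le_zpow_right₀ (by norm_num)
      have : (2 : ℤ) ≤ k := by exact_mod_cast hk
      nlinarith
    linarith
  classical
  have hmin (i : ℕ) (hi : i < Nat.find hex) : r < 2 * (2 : ℝ) ^ (-(k * i : ℤ)) :=
    not_le.1 (Nat.find_min hex hi)
  refine ⟨Nat.find hex, Nat.find_spec hex, ?_, hmin⟩
  rcases Nat.eq_zero_or_eq_succ_pred (Nat.find hex) with h | h
  · rw [h]
    have : (1 : ℝ) ≤ 2 ^ (k : ℤ) := one_le_zpow₀ (by norm_num) (by positivity)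
    simp only [Nat.cast_zero, mul_zero, sub_zero]
    linarith
  · refine (hmin (Nat.find hex).pred (by omega)).le.trans_eq ?_
    congr 2
    conv_rhs => rw [h]
    push_cast
    ring

/-- If `{y_s}` is a `(k,l)`-regular set (`k, l ≥ 2`) in a complete metric space `X`,
`D_s = B(y_s, 2^{-kn})` for `s ∈ l^n`, and `K = ⋂_n ⋃_{s ∈ l^n} D_s`, then
`dim_L K ≥ log l / (k log 2)`; in particular `dim_ML X ≥ log l / (k log 2)`. -/
theorem stmt6 {X : Type*} [MetricSpace X] [CompleteSpace X] (k l : ℕ) (hk : 2 ≤ k)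
    (hl : 2 ≤ l) (y : List (Fin l) → X) (hy : IsRegularSet k l y) :
    ENNReal.ofReal (Real.log l / (k * Real.log 2)) ≤
      lowerDim (⋂ n : ℕ, ⋃ s ∈ {s : List (Fin l) | s.length = n},
        Metric.closedBall (y s) ((2 : ℝ) ^ (-(k * n : ℤ)))) ∧
    ENNReal.ofReal (Real.log l / (k * Real.log 2)) ≤ modLowerDim (Set.univ : Set X) := by
  set K : Set X := ⋂ n : ℕ, ⋃ s ∈ {s : List (Fin l) | s.length = n},
        Metric.closedBall (y s) ((2 : ℝ) ^ (-(k * n : ℤ)))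
  suffices h : ENNReal.ofReal (Real.log l / (k * Real.log 2)) ≤ lowerDim K from
    ⟨h, h.trans (le_iSup₂_of_le K (Set.subset_univ K) le_rfl)⟩
  have hl0 : (0 : ℝ) < l := by exact_mod_cast (by omega : 0 < l)
  have hk0 : (0 : ℝ) < k := by exact_mod_cast (by omega : 0 < k)
  have hlog2 : 0 < Real.log 2 := Real.log_pos (by norm_num)
  have hα : 0 ≤ Real.log l / (k * Real.log 2) :=
    div_nonneg (Real.log_natCast_nonneg l) (by positivity)
  have hpow : ((2 : ℝ) ^ k) ^ (Real.log l / (k * Real.log 2)) = l := by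
    rw [Real.rpow_def_of_pos (by positivity), Real.log_pow]
    rw [mul_div_cancel₀ _ (by positivity), Real.exp_log hl0]
  apply le_sSup
  refine ⟨_, ⟨hα, 1 / (l : ℝ) ^ 2, by positivity, ?_⟩, rfl⟩
  intro r R hr hrR hRK x hx n hn
  have hR2 : R ≤ 2 := by
    have hsub : K ⊆ closedBall (y []) 1 := by
      intro z hz
      simpa using Set.mem_iInter.1 hz 0
    have h := hRK.trans (Metric.ediam_mono hsub)
    rw [← Metric.closedEBall_ofReal zero_le_one] at h
    have h := h.trans Metric.ediam_closedEBall_le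
    rwa [← ENNReal.ofReal_ofNat 2, ← ENNReal.ofReal_mul (by norm_num),
      ENNReal.ofReal_le_ofReal_iff (by norm_num), mul_one] at h
  obtain ⟨m, hm, hm', hmin⟩ := exists_scale hk (hr.trans hrR) hR2
  obtain ⟨N, hN, -, hNmin⟩ := exists_scale hk hr (hrR.le.trans hR2)
  have hmN : m ≤ N := by
    by_contra! h
    exact absurd (hmin N h) (by linarith)
  obtain ⟨j, hj⟩ : ∃ j : ℕ, j = N - 1 - m := ⟨_, rfl⟩
  have hcard : l ^ j ≤ n := by
    obtain ⟨s, hs, hxs⟩ : ∃ s : List (Fin l), s.length = m ∧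
        x ∈ closedBall (y s) ((2 : ℝ) ^ (-(k * m : ℤ))) := by
      simpa using Set.mem_iInter.1 hx m
    choose z hz hzK using fun t : Fin j → Fin l => hy.exists_mem_iInter hk hl (s ++ List.ofFn t)
    have := hn.card_le hr.le z (fun t => ⟨?_, hzK t⟩) ?_
    · simpa using this
    · have h1 := hy.closedBall_append_subset hk _ _ (hz t)
      rw [hs] at h1
      rw [mem_closedBall] at h1 hxs ⊢
      have := dist_triangle_right (z t) x (y s)
      linarith
    · intro t t' hne
      have hj0 : 0 < j := by
        rcases Nat.eq_zero_or_pos j with h | h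
        · subst h
          exact absurd (Subsingleton.elim t t') hne
        · exact h
      refine lt_of_lt_of_le ?_ (hy.le_dist_of_mem (by simp)
        (fun h => hne (List.ofFn_injective (List.append_cancel_left h))) (hz t) (hz t'))
      apply hNmin
      simp only [List.length_append, List.length_ofFn]
      omega
  have hratio : R / r ≤ ((2 : ℝ) ^ k) ^ (j + 2) := by
    rw [div_le_iff₀ hr]
    calc R ≤ 2 * (2 : ℝ) ^ (k - k * m : ℤ) := hm'
      _ ≤ 2 * (2 : ℝ) ^ ((k * (j + 2) : ℤ) + -(k * N : ℤ)) := by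
        gcongr
        · norm_num
        · have : (N : ℤ) ≤ j + 1 + m := by omega
          have : (0 : ℤ) ≤ k := by positivity
          nlinarith
      _ = ((2 : ℝ) ^ k) ^ (j + 2) * (2 * (2 : ℝ) ^ (-(k * N : ℤ))) := by
        rw [zpow_add₀ (by norm_num), ← pow_mul, ← zpow_natCast]
        push_cast
        ring
      _ ≤ ((2 : ℝ) ^ k) ^ (j + 2) * r := by gcongr
  have hrpow : (R / r) ^ (Real.log l / (k * Real.log 2)) ≤ (l : ℝ) ^ (j + 2) := by
    refine (Real.rpow_le_rpow (by have := hr.trans hrR; positivity) hratio hα).trans_eq ?_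
    rw [← Real.rpow_natCast, ← Real.rpow_mul (by positivity), mul_comm, Real.rpow_mul
      (by positivity), hpow, Real.rpow_natCast]
  calc 1 / (l : ℝ) ^ 2 * (R / r) ^ (Real.log l / (k * Real.log 2))
      ≤ 1 / (l : ℝ) ^ 2 * (l : ℝ) ^ (j + 2) := by gcongr
    _ = (l : ℝ) ^ j := by rw [pow_add]; field_simp
    _ ≤ n := by exact_mod_cast hcard
end

section
/- Let (X,ρ) be a metric space and let k, l ≥ 2 be integers. Then the family F(k,l) = {K ∈ 𝒦(X) : K contains a (k,l)-regular set} is a closed subset of the hyperspace 𝒦(X) of non-empty compact subsets of X endowed with the Hausdorff metric. -/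
open Metric ENNReal

variable {X : Type*} [MetricSpace X]

/-- For integers `k, l ≥ 2`, the family of non-empty compact subsets of `X` containing a
`(k,l)`-regular set is closed in the hyperspace `𝒦(X)` with the Hausdorff metric. -/
theorem stmt9 {X : Type*} [MetricSpace X] (k l : ℕ) (hk : 2 ≤ k) (hl : 2 ≤ l) :
    IsClosed {K : TopologicalSpace.NonemptyCompacts X |
      ∃ y : List (Fin l) → X, (∀ s, y s ∈ (K : Set X)) ∧ IsRegularSet k l y} := by
  refine IsSeqClosed.isClosed fun Ks K hKs hlim => ?_
  choose y hyK hy using hKs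
  have hnear (n : ℕ) (s : List (Fin l)) :
      ∃ z ∈ (K : Set X), dist (y n s) z ≤ dist (Ks n) K := by
    obtain ⟨z, hzK, hz⟩ := K.isCompact.exists_infDist_eq_dist K.nonempty (y n s)
    refine ⟨z, hzK, hz ▸ ?_⟩
    rw [NonemptyCompacts.dist_eq]
    exact infDist_le_hausdorffDist_of_mem (hyK n s)
      (hausdorffEDist_ne_top_of_nonempty_of_bounded (Ks n).nonempty K.nonempty
        (Ks n).isCompact.isBounded K.isCompact.isBounded)
  choose z hzK hz using hnear
  let U : Ultrafilter ℕ := Filter.hyperfilter ℕ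
  have hU : (U : Filter ℕ) ≤ Filter.atTop := Nat.hyperfilter_le_atTop
  have hconv (s : List (Fin l)) :
      ∃ x ∈ (K : Set X), Filter.Tendsto (fun n => y n s) U (nhds x) := by
    obtain ⟨x, hxK, hx⟩ := K.isCompact.ultrafilter_le_nhds (U.map fun n => z n s)
      (Filter.tendsto_principal.2 (Filter.Eventually.of_forall fun n => hzK n s))
    refine ⟨x, hxK, (tendsto_iff_of_dist ?_).2 hx⟩
    exact squeeze_zero (fun _ => dist_nonneg) (fun n => hz n s)
      ((tendsto_iff_dist_tendsto_zero.1 hlim).mono_left hU)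
  choose x hxK hx using hconv
  refine ⟨x, hxK, fun s c => ?_, fun s t hst hne => ?_⟩
  · exact le_of_tendsto' ((hx s).dist (hx _)) fun n => (hy n).1 s c
  · exact ge_of_tendsto' ((hx s).dist (hx t)) fun n => (hy n).2 s t hst hne
end
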